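/- arXiv:quant-ph/0610153 — 2 statements merged into one kernel-verified Lean document; each statement's English description precedes it below -/
import Mathlib

section
/- (Gauge reduction, 'Rain on your Parade' theorem.) Let F_q have characteristic p, and let C ⊆ F_q^{2n} be an F_p-linear additive code with D = C ∩ C^{⊥s} a proper subcode of C (i.e., C ≠ D), and suppose D^{⊥s} \ C is nonempty with d = swt(D^{⊥s} \ C). Then there exists an F_p-linear subcode C_s ⊆ C with |C_s| = |C|/p such that, setting D_s = C_s ∩ C_s^{⊥s}: |D_s| = p·|D|, every element of D_s^{⊥s} \ C_s has symplectic weight at least d, and swt(C_s) = swt(C). (In subsystem code language: an ((n,K,R>1,d))_q Clifford subsystem code exactly pure to d' implies the existence of an ((n,K,R/p,d))_q Clifford subsystem code exactly pure to d'.) -/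
/-!
The code `C_s` is the hyperplane `C ∩ z^⊥` of `C`, for a suitable `z ∈ C \ D`. As `z` is not in the
radical `D` of `C`, there is `w ∈ C` with `⟨z|w⟩ = 1`; then `C = C_s ⊕ ⟨w⟩`, so `|C_s| = |C|/p`, and
the radical of `C_s` is `D_s = D ⊕ ⟨z⟩`, so `|D_s| = p|D|`. The dual of `D_s` is
`D^⊥ ∩ z^⊥`, hence `D_s^⊥ \ C_s ⊆ D^⊥ \ C`, which gives the bound on the weights.

The minimum weight is preserved as soon as `C_s` contains some nonzero word `c` of `C` of minimum
weight, that is, as soon as `z ⊥ c`. If `c ∉ D`, take `z = c`, since the form is alternating; if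
`c ∈ D`, then `c ⊥ C` and every `z ∈ C \ D` works.
-/

open scoped Pointwise

noncomputable section

/-- `F_q^{2n}`: pairs `(a|b)` with `a, b ∈ F_q^n`. -/
abbrev Pairs (F : Type) (n : ℕ) := (Fin n → F) × (Fin n → F)

/-- Symplectic weight: the number of coordinates `i` with `(a_i, b_i) ≠ (0,0)`. -/
def swt {F : Type} [Zero F] {n : ℕ} (u : Pairs F n) : ℕ :=
  Nat.card {i : Fin n // (u.1 i, u.2 i) ≠ (0, 0)}

/-- Trace-symplectic form: `⟨(a|b)|(a'|b')⟩ₛ = Tr_{q/p}(a'·b − a·b')`. -/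
def sform (p : ℕ) {F : Type} [Field F] [Algebra (ZMod p) F] {n : ℕ}
    (u v : Pairs F n) : ZMod p :=
  Algebra.trace (ZMod p) F (∑ i, (v.1 i * u.2 i - u.1 i * v.2 i))

/-- Trace-symplectic dual of a set `S ⊆ F_q^{2n}`. -/
def sdual (p : ℕ) {F : Type} [Field F] [Algebra (ZMod p) F] {n : ℕ}
    (S : Set (Pairs F n)) : Set (Pairs F n) :=
  {v | ∀ w ∈ S, sform p v w = 0}

/-- The trace-symplectic form as an `F_p`-bilinear form. -/
def sformBilin (p : ℕ) (F : Type) [Field F] [Algebra (ZMod p) F] (n : ℕ) :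
    Pairs F n →ₗ[ZMod p] Pairs F n →ₗ[ZMod p] ZMod p :=
  LinearMap.mk₂ (ZMod p) (sform p)
    (fun u u' v => by
      simp only [sform, ← map_add, ← Finset.sum_add_distrib]
      congr 1
      exact Finset.sum_congr rfl fun i _ => by
        simp only [Prod.fst_add, Prod.snd_add, Pi.add_apply]; ring)
    (fun t u v => by
      simp only [sform, ← map_smul, Finset.smul_sum]
      congr 1
      exact Finset.sum_congr rfl fun i _ => by
        simp only [Prod.smul_fst, Prod.smul_snd, Pi.smul_apply, smul_sub, mul_smul_comm,
          smul_mul_assoc])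
    (fun u v v' => by
      simp only [sform, ← map_add, ← Finset.sum_add_distrib]
      congr 1
      exact Finset.sum_congr rfl fun i _ => by
        simp only [Prod.fst_add, Prod.snd_add, Pi.add_apply]; ring)
    (fun t u v => by
      simp only [sform, ← map_smul, Finset.smul_sum]
      congr 1
      exact Finset.sum_congr rfl fun i _ => by
        simp only [Prod.smul_fst, Prod.smul_snd, Pi.smul_apply, smul_sub, mul_smul_comm,
          smul_mul_assoc])

theorem sformBilin_apply (p : ℕ) {F : Type} [Field F] [Algebra (ZMod p) F] {n : ℕ}
    (u v : Pairs F n) : sformBilin p F n u v = sform p u v := rfl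

theorem sform_self (p : ℕ) {F : Type} [Field F] [Algebra (ZMod p) F] {n : ℕ}
    (u : Pairs F n) : sform p u u = 0 := by
  simp [sform]

theorem sform_swap (p : ℕ) {F : Type} [Field F] [Algebra (ZMod p) F] {n : ℕ}
    (u v : Pairs F n) : sform p v u = - sform p u v := by
  rw [sform, sform, ← map_neg, ← Finset.sum_neg_distrib]
  congr 1
  exact Finset.sum_congr rfl fun i _ => by ring

theorem sform_sub_smul_left (p : ℕ) {F : Type} [Field F] [Algebra (ZMod p) F] {n : ℕ}
    (x y v : Pairs F n) (t : ZMod p) :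
    sform p (x - t • y) v = sform p x v - t * sform p y v := by
  simp only [← sformBilin_apply, map_sub, map_smul, LinearMap.sub_apply, LinearMap.smul_apply,
    smul_eq_mul]

theorem sform_sub_smul_right (p : ℕ) {F : Type} [Field F] [Algebra (ZMod p) F] {n : ℕ}
    (x y v : Pairs F n) (t : ZMod p) :
    sform p v (x - t • y) = sform p v x - t * sform p v y := by
  simp only [← sformBilin_apply, map_sub, map_smul, smul_eq_mul]

/-- If `f w = 1` and `S ⊆ ker f`, then `S + ⟨w⟩` is a direct sum and has `p · |S|` elements. Here
`T = S + ⟨w⟩` is expressed through the projection `x ↦ x - f x • w` along `w`. -/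
theorem ncard_eq_mul_of_split {p : ℕ} {V : Type*} [AddCommGroup V] [Module (ZMod p) V]
    (f : V →ₗ[ZMod p] ZMod p) (w : V) (hw : f w = 1) (S T : Set V)
    (hS : ∀ x ∈ S, f x = 0) (hT : ∀ x, x ∈ T ↔ x - f x • w ∈ S) :
    T.ncard = S.ncard * p := by
  have e : T ≃ S × ZMod p :=
    { toFun := fun x => (⟨x.1 - f x.1 • w, (hT _).1 x.2⟩, f x.1)
      invFun := fun y => ⟨y.1.1 + y.2 • w, by
        rw [hT]; simp [hw, hS _ y.1.2]⟩
      left_inv := fun x => by simp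
      right_inv := fun y => by
        ext <;> simp [hw, hS _ y.1.2] }
  rw [← Nat.card_coe_set_eq, Nat.card_congr e, Nat.card_prod, Nat.card_zmod, Nat.card_coe_set_eq]

/-- gauge reduction, 'Rain on your Parade' theorem: if `C ⊆ F_q^{2n}` is an
additive code with `D = C ∩ C^{⊥s}` a proper subcode of `C`, `D^{⊥s} \ C` nonempty and
`d = swt(D^{⊥s} \ C)`, then there is an `F_p`-linear subcode `C_s ⊆ C` with `|C_s| = |C|/p`
such that, for `D_s = C_s ∩ C_s^{⊥s}`: `|D_s| = p·|D|`, every element of `D_s^{⊥s} \ C_s`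
has symplectic weight `≥ d`, and `swt(C_s) = swt(C)` (minimum nonzero weights). -/
theorem gauge_reduction (p n d : ℕ) (hp : p.Prime) (F : Type) [Field F] [Fintype F]
    [CharP F p] [Algebra (ZMod p) F]
    (C : Submodule (ZMod p) (Pairs F n)) (D : Set (Pairs F n))
    (hD : D = (C : Set (Pairs F n)) ∩ sdual p (C : Set (Pairs F n)))
    (hproper : D ≠ (C : Set (Pairs F n)))
    (hne : (sdual p D \ (C : Set (Pairs F n))).Nonempty)
    (hd : d = sInf (swt '' (sdual p D \ (C : Set (Pairs F n))))) :
    ∃ Cs : Submodule (ZMod p) (Pairs F n), Cs ≤ C ∧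
      (Cs : Set (Pairs F n)).ncard * p = (C : Set (Pairs F n)).ncard ∧
      ((Cs : Set (Pairs F n)) ∩ sdual p (Cs : Set (Pairs F n))).ncard = p * D.ncard ∧
      (∀ v ∈ sdual p ((Cs : Set (Pairs F n)) ∩ sdual p (Cs : Set (Pairs F n))) \
          (Cs : Set (Pairs F n)), d ≤ swt v) ∧
      sInf (swt '' ((Cs : Set (Pairs F n)) \ {0})) =
        sInf (swt '' ((C : Set (Pairs F n)) \ {0})) := by
  have : Fact p.Prime := ⟨hp⟩
  subst hD
  set D : Set (Pairs F n) := (C : Set (Pairs F n)) ∩ sdual p (C : Set (Pairs F n)) with hDdef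
  have hmemD : ∀ x, x ∈ D ↔ x ∈ C ∧ ∀ y ∈ C, sform p x y = 0 := fun x => Iff.rfl
  obtain ⟨z₀, hz₀C, hz₀D⟩ : ∃ z ∈ C, z ∉ D := by
    by_contra! h
    exact hproper (Set.Subset.antisymm Set.inter_subset_left h)
  have hz₀ : z₀ ≠ 0 := by
    rintro rfl
    refine hz₀D ((hmemD _).2 ⟨hz₀C, fun y _ => ?_⟩)
    simp [← sformBilin_apply]
  -- A nonzero word of `C` of minimum weight.
  obtain ⟨c, ⟨hcC, hc0⟩, hc⟩ : sInf (swt '' ((C : Set (Pairs F n)) \ {0})) ∈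
      swt '' ((C : Set (Pairs F n)) \ {0}) := Nat.sInf_mem ⟨_, z₀, ⟨hz₀C, hz₀⟩, rfl⟩
  obtain ⟨z, hzC, hzD, hzc⟩ : ∃ z ∈ C, z ∉ D ∧ sform p z c = 0 := by
    by_cases h : c ∈ D
    · exact ⟨z₀, hz₀C, hz₀D, by rw [sform_swap, ((hmemD _).1 h).2 _ hz₀C, neg_zero]⟩
    · exact ⟨c, hcC, h, sform_self p c⟩
  obtain ⟨w, hwC, hzw⟩ : ∃ w ∈ C, sform p z w = 1 := by
    obtain ⟨y, hyC, hy⟩ : ∃ y ∈ C, sform p z y ≠ 0 := by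
      by_contra! h
      exact hzD ((hmemD _).2 ⟨hzC, h⟩)
    refine ⟨(sform p z y)⁻¹ • y, C.smul_mem _ hyC, ?_⟩
    rw [← sformBilin_apply, map_smul, sformBilin_apply, smul_eq_mul, inv_mul_cancel₀ hy]
  set Cs : Submodule (ZMod p) (Pairs F n) := C ⊓ LinearMap.ker (sformBilin p F n z) with hCs
  have hmemCs : ∀ x, x ∈ Cs ↔ x ∈ C ∧ sform p z x = 0 := fun x => by
    rw [hCs, Submodule.mem_inf, LinearMap.mem_ker, sformBilin_apply]
  have hzCs : z ∈ Cs := (hmemCs z).2 ⟨hzC, sform_self p z⟩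
  set Ds : Set (Pairs F n) := (Cs : Set (Pairs F n)) ∩ sdual p (Cs : Set (Pairs F n)) with hDs
  have hmemDs : ∀ x, x ∈ Ds ↔ x ∈ Cs ∧ ∀ y ∈ Cs, sform p x y = 0 := fun x => Iff.rfl
  have hzDs : z ∈ Ds := (hmemDs z).2 ⟨hzCs, fun y hy => ((hmemCs y).1 hy).2⟩
  have hDDs : D ⊆ Ds := fun x hx => by
    obtain ⟨hxC, hx⟩ := (hmemD x).1 hx
    refine (hmemDs x).2 ⟨(hmemCs x).2 ⟨hxC, ?_⟩, fun y hy => hx y ((hmemCs y).1 hy).1⟩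
    rw [sform_swap, hx z hzC, neg_zero]
  have hprojC : ∀ x ∈ C, x - sform p z x • w ∈ Cs := fun x hx =>
    (hmemCs _).2 ⟨C.sub_mem hx (C.smul_mem _ hwC), by rw [sform_sub_smul_right, hzw]; ring⟩
  refine ⟨Cs, inf_le_left, ?_, ?_, ?_, ?_⟩
  · -- `C = C_s ⊕ ⟨w⟩`
    refine (ncard_eq_mul_of_split (sformBilin p F n z) w hzw _ _
      (fun x hx => ((hmemCs x).1 hx).2) fun x => ⟨hprojC x, fun h => ?_⟩).symm
    have hsum := C.add_mem ((hmemCs _).1 h).1 (C.smul_mem (sform p z x) hwC)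
    rwa [sformBilin_apply, sub_add_cancel] at hsum
  · -- `D_s = D ⊕ ⟨z⟩`
    rw [mul_comm]
    refine ncard_eq_mul_of_split ((sformBilin p F n).flip w) z hzw _ _
      (fun x hx => ((hmemD x).1 hx).2 w hwC) fun x => ?_
    rw [LinearMap.flip_apply, sformBilin_apply]
    constructor
    · intro hx
      obtain ⟨hxCs, hx⟩ := (hmemDs x).1 hx
      refine (hmemD _).2 ⟨C.sub_mem ((hmemCs x).1 hxCs).1 (C.smul_mem _ hzC), fun y hy => ?_⟩
      have h := hx _ (hprojC y hy)
      rw [sform_sub_smul_right] at h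
      rw [sform_sub_smul_left]
      linear_combination h
    · intro hx
      obtain ⟨hxCs, hx⟩ := (hmemDs _).1 (hDDs hx)
      refine (hmemDs x).2 ⟨?_, fun y hy => ?_⟩
      · have h := Cs.add_mem hxCs (Cs.smul_mem (sform p x w) hzCs)
        rwa [sub_add_cancel] at h
      · have h := hx y hy
        rwa [sform_sub_smul_left, ((hmemCs y).1 hy).2, mul_zero, sub_zero] at h
  · -- `D_s^⊥ \ C_s ⊆ D^⊥ \ C`
    rintro v ⟨hv, hvCs⟩
    rw [hd]
    refine Nat.sInf_le ⟨v, ⟨fun y hy => hv y (hDDs hy), fun hvC => hvCs ?_⟩, rfl⟩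
    exact (hmemCs v).2 ⟨hvC, by rw [sform_swap, hv z hzDs, neg_zero]⟩
  · have hcCs : c ∈ Cs := (hmemCs c).2 ⟨hcC, hzc⟩
    apply le_antisymm
    · rw [← hc]
      exact Nat.sInf_le ⟨c, ⟨hcCs, hc0⟩, rfl⟩
    · obtain ⟨x, ⟨hxCs, hx0⟩, hx⟩ := Nat.sInf_mem
        (s := swt '' ((Cs : Set (Pairs F n)) \ {0})) ⟨_, c, ⟨hcCs, hc0⟩, rfl⟩
      rw [← hx]
      exact Nat.sInf_le ⟨x, ⟨((hmemCs x).1 hxCs).1, hx0⟩, rfl⟩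
end
end

section
/- (Subsystem codes from classical MDS codes are pure.) Let C ⊆ F_{q^2}^n be an F_{q^2}-linear MDS code with parameters [n, k, n−k+1]_{q^2}, and suppose C^{⊥h} is not contained in C and C is not contained in C^{⊥h}. Let D = C ∩ C^{⊥h}. Then the minimum Hamming weight of a nonzero codeword of D^{⊥h} is strictly less than n − k + 1 = wt(C); consequently wt(D^{⊥h} \ C) = wt(D^{⊥h}), i.e., the resulting subsystem code is pure. -/
/-!
The code `C` lies in `hdual q D`: for `x ∈ C` and `y ∈ D` the value `⟨y|x⟩ₕ` vanishes, and since
`a ^ q ^ 2 = a` in a field with `q ^ 2` elements, `⟨x|y⟩ₕ = ⟨y|x⟩ₕ ^ q`. As `D ⊆ C`, also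
`hdual q C ⊆ hdual q D`. The hermitian dual of `D` is a linear code (`x ↦ x ^ q` is additive), and a
vector of `hdual q C` outside `C` shows that it properly contains `C`. So its dimension exceeds `k`,
and the Singleton bound (`exists_hwt_le`) yields a nonzero word in it of weight at most `n - k`,
which is below the minimum weight of `C`. A word of minimum weight in `hdual q D` is therefore
outside `C`, which gives purity.
-/

noncomputable section

/-- Hamming weight of a vector. -/
def hwt {E : Type} [Zero E] {n : ℕ} (x : Fin n → E) : ℕ :=
  Nat.card {i : Fin n // x i ≠ 0}

/-- Hermitian inner product on `F_{q²}^n`: `⟨x|y⟩ₕ = Σ xᵢ^q yᵢ`. -/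
def hform (q : ℕ) {E : Type} [Field E] {n : ℕ} (x y : Fin n → E) : E :=
  ∑ i, x i ^ q * y i

/-- Hermitian dual of a set `S ⊆ F_{q²}^n`. -/
def hdual (q : ℕ) {E : Type} [Field E] {n : ℕ} (S : Set (Fin n → E)) : Set (Fin n → E) :=
  {x | ∀ y ∈ S, hform q x y = 0}

/-- The hermitian dual of any set, as a linear code; additivity of `x ↦ x ^ q` needs `q` to be a power
of the characteristic. -/
def hdualSubmodule (p m : ℕ) [Fact p.Prime] {E : Type} [Field E] [CharP E p] {n : ℕ}
    (S : Set (Fin n → E)) : Submodule E (Fin n → E) where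
  carrier := hdual (p ^ m) S
  zero_mem' := fun y _ => by
    have hp : p ^ m ≠ 0 := pow_ne_zero _ (Fact.out : p.Prime).ne_zero
    simp only [hform, Pi.zero_apply, zero_pow hp, zero_mul, Finset.sum_const_zero]
  add_mem' := fun {a b} ha hb y hy => by
    have h1 := ha y hy
    have h2 := hb y hy
    simp only [hform] at h1 h2 ⊢
    simp only [Pi.add_apply, add_pow_char_pow, add_mul, Finset.sum_add_distrib, h1, h2, add_zero]
  smul_mem' := fun c x hx y hy => by
    have h1 := hx y hy
    simp only [hform] at h1 ⊢
    simp only [Pi.smul_apply, smul_eq_mul, mul_pow, mul_assoc, ← Finset.mul_sum, h1, mul_zero]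

lemma hform_swap_pow (p m : ℕ) [Fact p.Prime] {E : Type} [Field E] [Fintype E] [CharP E p]
    (hE : Fintype.card E = (p ^ m) ^ 2) {n : ℕ} (x y : Fin n → E) :
    hform (p ^ m) x y = hform (p ^ m) y x ^ p ^ m := by
  simp only [hform, sum_pow_char_pow]
  refine Finset.sum_congr rfl fun i _ => ?_
  have h : (y i ^ p ^ m) ^ p ^ m = y i := by
    rw [← pow_mul, ← sq, ← hE, FiniteField.pow_card]
  rw [mul_pow, h, mul_comm]

/-- Singleton bound: a code of dimension greater than `k` has a nonzero word vanishing on the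
first `k` coordinates. -/
lemma exists_hwt_le {E : Type} [Field E] {n k : ℕ} (W : Submodule E (Fin n → E))
    (hW : k < Module.finrank E W) : ∃ x ∈ W, x ≠ 0 ∧ hwt x ≤ n - k := by
  classical
  have hkn : k ≤ n := by
    have := Submodule.finrank_le W
    rw [Module.finrank_fin_fun] at this
    omega
  let f : W →ₗ[E] (Fin k → E) := (LinearMap.funLeft E E (Fin.castLE hkn)).comp W.subtype
  have hker : LinearMap.ker f ≠ ⊥ :=
    LinearMap.ker_ne_bot_of_finrank_lt (by rwa [Module.finrank_fin_fun])
  obtain ⟨x, hx, hx0⟩ := Submodule.exists_mem_ne_zero_of_ne_bot hker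
  refine ⟨x, x.2, fun h => hx0 (Subtype.ext h), ?_⟩
  have hz : ∀ j : Fin k, (x : Fin n → E) (Fin.castLE hkn j) = 0 := fun j =>
    congrFun (LinearMap.mem_ker.1 hx) j
  have hsub : (Finset.univ.filter fun i => (x : Fin n → E) i ≠ 0) ⊆
      (Finset.univ.map (Fin.castLEEmb hkn))ᶜ := by
    intro i hi
    simp only [Finset.mem_filter, Finset.mem_univ, true_and] at hi
    simp only [Finset.mem_compl, Finset.mem_map, Finset.mem_univ, true_and, not_exists]
    rintro j rfl
    exact hi (hz j)
  have hc := Finset.card_le_card hsub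
  rw [Finset.card_compl, Finset.card_map, Finset.card_univ, Fintype.card_fin,
    Fintype.card_fin] at hc
  rwa [hwt, Nat.card_eq_fintype_card, Fintype.card_subtype]

/-- subsystem codes from classical MDS codes are pure: if `C ⊆ F_{q²}^n` is
an `F_{q²}`-linear `[n,k,n−k+1]` MDS code with `C^{⊥h} ⊄ C` and `C ⊄ C^{⊥h}`, and
`D = C ∩ C^{⊥h}`, then the minimum weight of a nonzero codeword of `D^{⊥h}` is strictly
less than `n − k + 1 = wt(C)`; consequently `wt(D^{⊥h} \ C) = wt(D^{⊥h})`, i.e. the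
resulting subsystem code is pure. -/
theorem mds_subsystem_pure (p m q n k : ℕ) (hp : p.Prime) (hq : q = p ^ m)
    (E : Type) [Field E] [Fintype E] [CharP E p] (hE : Fintype.card E = q ^ 2)
    (C : Submodule E (Fin n → E)) (hk : Module.finrank E C = k) (hkn : k ≤ n)
    (hmds : sInf (hwt '' ((C : Set (Fin n → E)) \ {0})) = n - k + 1)
    (h1 : ¬ hdual q (C : Set (Fin n → E)) ⊆ (C : Set (Fin n → E)))
    (h2 : ¬ (C : Set (Fin n → E)) ⊆ hdual q (C : Set (Fin n → E)))
    (D : Set (Fin n → E))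
    (hD : D = (C : Set (Fin n → E)) ∩ hdual q (C : Set (Fin n → E))) :
    sInf (hwt '' (hdual q D \ {0})) < n - k + 1 ∧
    sInf (hwt '' (hdual q D \ (C : Set (Fin n → E)))) =
      sInf (hwt '' (hdual q D \ {0})) := by
  have : Fact p.Prime := ⟨hp⟩
  subst hq
  have hCW : C < hdualSubmodule p m D := by
    refine lt_of_le_of_ne ?_ ?_
    · intro x hx y hy
      rw [hD] at hy
      rw [hform_swap_pow p m hE, hy.2 x hx,
        zero_pow (pow_ne_zero _ hp.ne_zero)]
    · intro h
      refine h1 fun x hx => ?_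
      have : x ∈ hdualSubmodule p m D := fun y hy => hx y (by rw [hD] at hy; exact hy.1)
      rwa [← h] at this
  obtain ⟨x, hxW, hx0, hxw⟩ := exists_hwt_le (k := k) (hdualSubmodule p m D)
    (hk ▸ Submodule.finrank_lt_finrank_of_lt hCW)
  have hne : (hwt '' (hdual (p ^ m) D \ {0})).Nonempty := ⟨_, x, ⟨hxW, hx0⟩, rfl⟩
  have hlt : sInf (hwt '' (hdual (p ^ m) D \ {0})) < n - k + 1 :=
    Nat.lt_succ_of_le (le_trans (Nat.sInf_le ⟨x, ⟨hxW, hx0⟩, rfl⟩) hxw)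
  refine ⟨hlt, ?_⟩
  obtain ⟨z, ⟨hzW, hz0⟩, hz⟩ := Nat.sInf_mem hne
  have hzC : z ∉ C := fun hzC => by
    have := Nat.sInf_le (s := hwt '' ((C : Set (Fin n → E)) \ {0})) ⟨z, ⟨hzC, hz0⟩, rfl⟩
    omega
  apply le_antisymm
  · rw [← hz]
    exact Nat.sInf_le ⟨z, ⟨hzW, hzC⟩, rfl⟩
  · obtain ⟨w, ⟨hwW, hwC⟩, hw⟩ := Nat.sInf_mem
      (s := hwt '' (hdual (p ^ m) D \ (C : Set (Fin n → E)))) ⟨_, z, ⟨hzW, hzC⟩, rfl⟩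
    rw [← hw]
    refine Nat.sInf_le ⟨w, ⟨hwW, ?_⟩, rfl⟩
    rintro rfl
    exact hwC C.zero_mem
end
end
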